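/- Let P be a stochastic matrix over Ω and let C ⊆ Ω with associated projection p = ∑_{i∈C} p_i ∈ ℓ^∞(Ω). Then p is reducing for the subproduct system Arv(P) if and only if every path in the directed graph of P that starts and ends in C stays entirely in C. -/

import Mathlib

/-- A stochastic matrix over a countable set `Ω`. -/
def IsStochastic {Ω : Type*} (P : Ω → Ω → ℝ) : Prop :=
  (∀ i j, 0 ≤ P i j) ∧ ∀ i, HasSum (fun j => P i j) 1

/-- Matrix product. -/
noncomputable def stochMul {Ω : Type*} (P Q : Ω → Ω → ℝ) : Ω → Ω → ℝ :=
  fun i k => ∑' j, P i j * Q j k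

-- Matrix powers `P^n`.
open Classical in
noncomputable def stochPow {Ω : Type*} (P : Ω → Ω → ℝ) : ℕ → Ω → Ω → ℝ
  | 0 => fun i j => if i = j then 1 else 0
  | n + 1 => stochMul (stochPow P n) P

/-- Membership in the `n`-th fiber of the Arveson–Stinespring subproduct system `Arv(P)` in its
standard presentation: matrices supported on the support of `P^n` with uniformly `ℓ²`-bounded
columns. -/
def InArvFiber {Ω : Type*} (P : Ω → Ω → ℝ) (n : ℕ) (A : Ω → Ω → ℂ) : Prop :=
  (∀ i j, ¬ 0 < stochPow P n i j → A i j = 0) ∧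
  ∃ C : ℝ, ∀ (j : Ω) (s : Finset Ω), ∑ i ∈ s, ‖A i j‖ ^ 2 ≤ C

open Classical in
/-- The subproduct multiplication maps of `Arv(P)` (on simple tensors):
`U_{n,m}(A ⊗ B) = (√(P^{n+m}))^♭ * [(√(P^n) * A) ⬝ (√(P^m) * B)]`, where `*` denotes Schur
(entrywise) product and `♭` the entrywise reciprocal on the support. -/
noncomputable def arvMul {Ω : Type*} (P : Ω → Ω → ℝ) (n m : ℕ) (A B : Ω → Ω → ℂ) :
    Ω → Ω → ℂ :=
  fun i k =>
    if 0 < stochPow P (n + m) i k then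
      (∑' j, ((Real.sqrt (stochPow P n i j) : ℂ) * A i j) *
        ((Real.sqrt (stochPow P m j k) : ℂ) * B j k)) / (Real.sqrt (stochPow P (n + m) i k) : ℂ)
    else 0

open Classical in
/-- The left compression `p A` of a matrix by the projection associated to `C ⊆ Ω`. -/
noncomputable def cutL {Ω : Type*} (C : Set Ω) (A : Ω → Ω → ℂ) : Ω → Ω → ℂ :=
  fun i j => if i ∈ C then A i j else 0

open Classical in
/-- The right compression `A p` of a matrix by the projection associated to `C ⊆ Ω`. -/
noncomputable def cutR {Ω : Type*} (C : Set Ω) (A : Ω → Ω → ℂ) : Ω → Ω → ℂ :=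
  fun i j => if j ∈ C then A i j else 0

/-- The projection `p = ∑_{i ∈ C} p_i` is reducing for `Arv(P)`; for the commutative algebra
`ℓ^∞(Ω)` this is equivalent to `U_{n,m}(p ξ (1-p) ⊗ (1-p) η p) = 0` for all fibers and all
`ξ, η`, which is the formulation used here. -/
def IsReducingSet {Ω : Type*} (P : Ω → Ω → ℝ) (C : Set Ω) : Prop :=
  ∀ (n m : ℕ) (A B : Ω → Ω → ℂ), InArvFiber P n A → InArvFiber P m B →
    arvMul P n m (cutR Cᶜ (cutL C A)) (cutR C (cutL Cᶜ B)) = 0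

/-! On matrix units `U_{n,m}(E_{ij} ⊗ E_{jk})` is a positive multiple of `E_{ik}` as soon as
`(P^n)_{ij}` and `(P^m)_{jk}` are positive, and matrix units see every entry of the fibers. So `p`
is reducing exactly when no `j ∉ C` satisfies `(P^n)_{ij} > 0` and `(P^m)_{jk} > 0` with
`i, k ∈ C`. Since `(P^n)_{ij} > 0` means that some path of length `n` leads from `i` to `j`, such
a `j` is the same thing as a path from `C` to `C` that leaves `C` on the way. -/

section

variable {Ω : Type*} {P Q : Ω → Ω → ℝ} {C : Set Ω} {n m : ℕ} {i j k : Ω} {γ : ℕ → Ω}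

/-- `γ 0, …, γ n` is a path in the directed graph of `P`. A path is encoded by an infinite
sequence whose terms beyond `n` are irrelevant. -/
def IsPath (P : Ω → Ω → ℝ) (n : ℕ) (γ : ℕ → Ω) : Prop :=
  ∀ t < n, 0 < P (γ t) (γ (t + 1))

namespace IsStochastic

theorem le_one (hP : IsStochastic P) (i j : Ω) : P i j ≤ 1 :=
  le_hasSum (hP.2 i) j fun l _ => hP.1 i l

theorem summable_mul (hP : IsStochastic P) (hQ : IsStochastic Q) (i k : Ω) :
    Summable fun j => P i j * Q j k :=
  (hP.2 i).summable.of_nonneg_of_le (fun j => mul_nonneg (hP.1 i j) (hQ.1 j k))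
    fun j => mul_le_of_le_one_right (hP.1 i j) (hQ.le_one j k)

theorem stochMul (hP : IsStochastic P) (hQ : IsStochastic Q) : IsStochastic (stochMul P Q) := by
  refine ⟨fun i k => tsum_nonneg fun j => mul_nonneg (hP.1 i j) (hQ.1 j k), fun i => ?_⟩
  have row (j : Ω) : HasSum (fun k => P i j * Q j k) (P i j) := by
    simpa only [mul_one] using (hQ.2 j).mul_left (P i j)
  have summable : Summable fun x : Ω × Ω => P i x.1 * Q x.1 x.2 := by
    refine (summable_prod_of_nonneg fun x => mul_nonneg (hP.1 i x.1) (hQ.1 x.1 x.2)).2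
      ⟨fun j => (row j).summable, ?_⟩
    simpa only [(row _).tsum_eq] using (hP.2 i).summable
  have total : HasSum (fun x : Ω × Ω => P i x.1 * Q x.1 x.2) 1 := by
    convert summable.hasSum
    exact (hP.2 i).unique (summable.hasSum.prod_fiberwise row)
  exact ((Equiv.prodComm Ω Ω).hasSum_iff.2 total).prod_fiberwise
    fun k => (hP.summable_mul hQ i k).hasSum

theorem stochPow (hP : IsStochastic P) : ∀ n, IsStochastic (stochPow P n)
  | 0 => by
    classical
    refine ⟨fun i j => ?_, fun i => ?_⟩
    · simp only [_root_.stochPow]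
      split_ifs <;> norm_num
    · simpa only [_root_.stochPow, eq_comm] using hasSum_ite_eq i (1 : ℝ)
  | n + 1 => (hP.stochPow n).stochMul hP

end IsStochastic

theorem stochPow_zero_pos_iff : 0 < stochPow P 0 i j ↔ i = j := by
  simp only [stochPow]
  split_ifs with h <;> simp [h]

theorem stochPow_nonneg (hP : ∀ i j, 0 ≤ P i j) : ∀ n i j, 0 ≤ stochPow P n i j
  | 0, i, j => by
    simp only [stochPow]
    split_ifs <;> norm_num
  | n + 1, i, k => tsum_nonneg fun j => mul_nonneg (stochPow_nonneg hP n i j) (hP j k)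

theorem exists_pos_of_stochPow_succ_pos (hP : ∀ i j, 0 ≤ P i j)
    (h : 0 < stochPow P (n + 1) i k) : ∃ j, 0 < stochPow P n i j ∧ 0 < P j k := by
  obtain ⟨j, hj⟩ : ∃ j, stochPow P n i j * P j k ≠ 0 := by
    by_contra! hzero
    exact h.ne' ((tsum_congr hzero).trans tsum_zero)
  exact ⟨j, (stochPow_nonneg hP n i j).lt_of_ne' (left_ne_zero_of_mul hj),
    (hP j k).lt_of_ne' (right_ne_zero_of_mul hj)⟩

theorem IsPath.exists_extension (hP : ∀ i j, 0 ≤ P i j) (hγ : IsPath P n γ)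
    (h : 0 < stochPow P m (γ n) k) :
    ∃ δ, IsPath P (n + m) δ ∧ (∀ t ≤ n, δ t = γ t) ∧ δ (n + m) = k := by
  induction m generalizing k with
  | zero => exact ⟨γ, hγ, fun _ _ => rfl, stochPow_zero_pos_iff.1 h⟩
  | succ m ih =>
    obtain ⟨j, hj, hjk⟩ := exists_pos_of_stochPow_succ_pos hP h
    obtain ⟨δ, hδ, hδγ, rfl⟩ := ih hj
    have update_of_le {t : ℕ} (ht : t ≤ n + m) : Function.update δ (n + m + 1) k t = δ t :=
      Function.update_of_ne (by lia) _ _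
    refine ⟨Function.update δ (n + m + 1) k, fun t ht => ?_,
      fun t ht => (update_of_le (by lia)).trans (hδγ t ht), Function.update_self ..⟩
    rcases (show t ≤ n + m by lia).eq_or_lt with rfl | hlt
    · rwa [update_of_le le_rfl, Function.update_self]
    · rw [update_of_le hlt.le, update_of_le hlt]
      exact hδ t hlt

section ConvergentPowers

variable (hP : ∀ i j, 0 ≤ P i j) (hsum : ∀ n i k, Summable fun j => stochPow P n i j * P j k)
include hP hsum

theorem stochPow_succ_pos (hij : 0 < stochPow P n i j) (hjk : 0 < P j k) :
    0 < stochPow P (n + 1) i k :=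
  (hsum n i k).tsum_pos (fun l => mul_nonneg (stochPow_nonneg hP n i l) (hP l k)) j
    (mul_pos hij hjk)

theorem stochPow_add_pos (hij : 0 < stochPow P n i j) (hjk : 0 < stochPow P m j k) :
    0 < stochPow P (n + m) i k := by
  induction m generalizing k with
  | zero => rwa [← stochPow_zero_pos_iff.1 hjk]
  | succ m ih =>
    obtain ⟨l, hjl, hlk⟩ := exists_pos_of_stochPow_succ_pos hP hjk
    exact stochPow_succ_pos hP hsum (ih hjl) hlk

theorem IsPath.stochPow_pos (hγ : IsPath P (n + m) γ) :
    0 < stochPow P m (γ n) (γ (n + m)) := by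
  induction m with
  | zero => exact stochPow_zero_pos_iff.2 rfl
  | succ m ih =>
    exact stochPow_succ_pos hP hsum (ih fun t ht => hγ t (by lia)) (hγ (n + m) (by lia))

end ConvergentPowers

section MatrixUnits

variable [DecidableEq Ω]

theorem inArvFiber_single (h : 0 < stochPow P n i j) (z : ℂ) :
    InArvFiber P n (Matrix.single i j z) := by
  refine ⟨fun a b hab => Matrix.single_apply_of_ne _ _ _ _ _ ?_, ‖z‖ ^ 2, fun b s => ?_⟩
  · rintro ⟨rfl, rfl⟩
    exact hab h
  · calc ∑ a ∈ s, ‖Matrix.single i j z a b‖ ^ 2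
        ≤ ∑ a ∈ s, if i = a then ‖z‖ ^ 2 else 0 := by
          refine Finset.sum_le_sum fun a _ => ?_
          by_cases hia : i = a <;> by_cases hjb : j = b <;> simp [hia, hjb]
      _ ≤ ‖z‖ ^ 2 := by
          rw [Finset.sum_ite_eq]
          split_ifs
          exacts [le_rfl, sq_nonneg _]

theorem cutL_single (hi : i ∈ C) (z : ℂ) :
    cutL C (Matrix.single i j z) = Matrix.single i j z := by
  ext a b
  simp only [cutL, ite_eq_left_iff]
  refine fun ha => (Matrix.single_apply_of_row_ne ?_ _ _ _).symm
  exact ne_of_mem_of_not_mem hi ha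

theorem cutR_single (hj : j ∈ C) (z : ℂ) :
    cutR C (Matrix.single i j z) = Matrix.single i j z := by
  ext a b
  simp only [cutR, ite_eq_left_iff]
  refine fun hb => (Matrix.single_apply_of_col_ne _ _ ?_ _).symm
  exact ne_of_mem_of_not_mem hj hb

theorem arvMul_single_single (h : 0 < stochPow P (n + m) i k) (z w : ℂ) :
    arvMul P n m (Matrix.single i j z) (Matrix.single j k w) i k =
      ((√(stochPow P n i j) : ℂ) * z) * ((√(stochPow P m j k) : ℂ) * w) /
        (√(stochPow P (n + m) i k) : ℂ) := by
  simp only [arvMul, if_pos h]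
  rw [tsum_eq_single j fun l hl => by simp [hl.symm]]
  simp

end MatrixUnits

theorem isReducingSet_of_forall_stochPow_pos
    (h : ∀ n m, ∀ i ∈ C, ∀ k ∈ C, ∀ j, 0 < stochPow P n i j → 0 < stochPow P m j k → j ∈ C) :
    IsReducingSet P C := by
  intro n m A B hA hB
  have summand_eq_zero (i j k : Ω) (a b : ℂ) :
      a * cutR Cᶜ (cutL C A) i j * (b * cutR C (cutL Cᶜ B) j k) = 0 := by
    by_contra hne
    simp only [cutR, cutL, mul_eq_zero, not_or, ite_eq_right_iff, Classical.not_imp,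
      Set.mem_compl_iff] at hne
    obtain ⟨⟨-, hj, hi, hAij⟩, -, hk, -, hBjk⟩ := hne
    exact hj (h n m i hi k hk j (not_imp_comm.1 (hA.1 i j) hAij) (not_imp_comm.1 (hB.1 j k) hBjk))
  ext i k
  simp only [arvMul, summand_eq_zero, tsum_zero, zero_div, ite_self, Pi.zero_apply]

theorem IsReducingSet.mem_of_stochPow_pos (hP : ∀ i j, 0 ≤ P i j)
    (hsum : ∀ n i k, Summable fun j => stochPow P n i j * P j k) (hC : IsReducingSet P C)
    (hi : i ∈ C) (hk : k ∈ C) (hij : 0 < stochPow P n i j) (hjk : 0 < stochPow P m j k) :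
    j ∈ C := by
  classical
  by_contra hj
  have hik := stochPow_add_pos hP hsum hij hjk
  have vanish := congrFun₂ (hC n m _ _ (inArvFiber_single hij 1) (inArvFiber_single hjk 1)) i k
  rw [cutL_single hi, cutR_single (Set.mem_compl hj), cutL_single (Set.mem_compl hj),
    cutR_single hk, arvMul_single_single hik, mul_one, mul_one] at vanish
  have sqrt_ne_zero {x : ℝ} (hx : 0 < x) : (√x : ℂ) ≠ 0 :=
    Complex.ofReal_ne_zero.2 (Real.sqrt_pos.2 hx).ne'
  exact div_ne_zero (mul_ne_zero (sqrt_ne_zero hij) (sqrt_ne_zero hjk)) (sqrt_ne_zero hik) vanish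

/-- The series hypothesis says that the powers of `P` are genuine: a divergent `tsum` is `0`. -/
theorem isReducingSet_iff_paths_general (hP : ∀ i j, 0 ≤ P i j)
    (hsum : ∀ n i k, Summable fun j => stochPow P n i j * P j k) (C : Set Ω) :
    IsReducingSet P C ↔
      ∀ (ℓ : ℕ) (γ : ℕ → Ω), γ 0 ∈ C → γ ℓ ∈ C →
        (∀ k < ℓ, 0 < P (γ k) (γ (k + 1))) → ∀ k ≤ ℓ, γ k ∈ C := by
  constructor
  · intro hC ℓ γ h0 hℓ hγ k hk
    obtain ⟨m, rfl⟩ := Nat.exists_eq_add_of_le hk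
    have start : 0 < stochPow P k (γ 0) (γ k) := by
      simpa only [zero_add] using IsPath.stochPow_pos (n := 0) (m := k) hP hsum
        fun t ht => hγ t (by lia)
    exact hC.mem_of_stochPow_pos hP hsum h0 hℓ start (IsPath.stochPow_pos hP hsum hγ)
  · refine fun h => isReducingSet_of_forall_stochPow_pos fun n m i hi k hk j hij hjk => ?_
    have trivial_path : IsPath P 0 fun _ => i := fun t ht => absurd ht t.not_lt_zero
    obtain ⟨γ, hγ, hγi, rfl⟩ := trivial_path.exists_extension hP hij
    obtain ⟨δ, hδ, hδγ, rfl⟩ := hγ.exists_extension hP hjk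
    have hδ0 : δ 0 = i := (hδγ 0 (Nat.zero_le _)).trans (hγi 0 le_rfl)
    rw [← hδγ _ le_rfl]
    exact h _ δ (hδ0 ▸ hi) hk hδ _ (Nat.le_add_right _ _)

end

/-- `p = ∑_{i ∈ C} p_i` is reducing for `Arv(P)` if and only if every path in the
directed graph of `P` which starts and ends in `C` stays entirely in `C`. -/
theorem isReducingSet_iff_paths {Ω : Type*} [Countable Ω] {P : Ω → Ω → ℝ}
    (hP : IsStochastic P) (C : Set Ω) :
    IsReducingSet P C ↔
      ∀ (ℓ : ℕ) (γ : ℕ → Ω), γ 0 ∈ C → γ ℓ ∈ C →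
        (∀ k < ℓ, 0 < P (γ k) (γ (k + 1))) → ∀ k ≤ ℓ, γ k ∈ C := by
  exact isReducingSet_iff_paths_general hP.1 (fun n => (hP.stochPow n).summable_mul hP) C
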